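/- Let g be a finite-dimensional real Lie algebra that is semisimple and whose Killing form is negative definite, and let u be a Lie subalgebra of g. Then u is reductive in g: u is the internal direct sum of its derived subalgebra ⁅u,u⁆ and its center Z(u) (i.e. u = ⁅u,u⁆ + Z(u) and ⁅u,u⁆ ∩ Z(u) = 0), the Lie algebra ⁅u,u⁆ is semisimple, and for every x ∈ Z(u) the adjoint endomorphism ad_g(x) : g → g is a semisimple linear endomorphism. -/

import Mathlib

/-! If a bilinear form on a finite-dimensional space is anisotropic, then every subspace is
complemented by its orthogonal. Hence endomorphisms skew-adjoint for the form are semisimple, and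
for an invariant form on a Lie algebra the derived ideal is complemented by its orthogonal, which
is the center. Moreover `⁅x, ⁅x, y⁆⁆ = 0` forces `⁅x, y⁆` to be isotropic, hence zero, so abelian
ideals are central, and a Lie algebra with trivial center has trivial radical. Invariance and
anisotropy are inherited by subalgebras, so all of this applies to each of them. -/

open LinearMap (BilinForm)
open LieAlgebra (ad center)

theorem anisotropic_toQuadraticMap_restrict {R M : Type*} [CommRing R] [AddCommGroup M]
    [Module R M] {B : BilinForm R M} (haniso : B.toQuadraticMap.Anisotropic)
    (W : Submodule R M) : (B.restrict W).toQuadraticMap.Anisotropic :=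
  fun x hx ↦ Subtype.ext (haniso x hx)

theorem isCompl_orthogonal_of_anisotropic {K V : Type*} [Field K] [AddCommGroup V] [Module K V]
    [FiniteDimensional K V] {B : BilinForm K V} (haniso : B.toQuadraticMap.Anisotropic)
    (W : Submodule K V) : IsCompl W (B.orthogonal W) := by
  have hdisj : Disjoint W (B.orthogonal W) :=
    Submodule.disjoint_def.mpr fun x hx hx' ↦ haniso x (hx' x hx)
  refine (Submodule.isCompl_iff_disjoint _ _ ?_).mpr hdisj
  rw [BilinForm.finrank_add_finrank_orthogonal']
  exact Nat.le_add_right _ _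

theorem orthogonal_mem_invtSubmodule_of_isSkewAdjoint {R M : Type*} [CommRing R]
    [AddCommGroup M] [Module R M] {B : BilinForm R M} {f : Module.End R M}
    (hf : B.IsSkewAdjoint f) {p : Submodule R M} (hp : p ∈ f.invtSubmodule) :
    B.orthogonal p ∈ f.invtSubmodule := by
  intro y hy x hx
  have hskew : B (f x) y = -B x (f y) := by simpa using hf x y
  have hzero : B (f x) y = 0 := hy (f x) (hp hx)
  exact neg_eq_zero.mp (hskew.symm.trans hzero)

theorem isSemisimple_of_isSkewAdjoint_of_anisotropic {K V : Type*} [Field K] [AddCommGroup V]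
    [Module K V] [FiniteDimensional K V] {B : BilinForm K V}
    (haniso : B.toQuadraticMap.Anisotropic) {f : Module.End K V} (hf : B.IsSkewAdjoint f) :
    f.IsSemisimple :=
  Module.End.isSemisimple_iff.mpr fun p hp ↦
    ⟨B.orthogonal p, orthogonal_mem_invtSubmodule_of_isSkewAdjoint hf hp,
      isCompl_orthogonal_of_anisotropic haniso p⟩

section CommRing

variable {R L : Type*} [CommRing R] [LieRing L]

theorem lie_eq_zero_of_lie_lie_eq_zero_of_anisotropic {M : Type*} [AddCommGroup M] [Module R M]
    [LieRingModule L M] {Φ : BilinForm R M} (hinv : Φ.lieInvariant L)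
    (haniso : Φ.toQuadraticMap.Anisotropic) {x : L} {m : M} (h : ⁅x, ⁅x, m⁆⁆ = 0) :
    ⁅x, m⁆ = 0 :=
  haniso ⁅x, m⁆ <| by
    rw [LinearMap.BilinMap.toQuadraticMap_apply, hinv, h, map_zero, neg_zero]

variable [LieAlgebra R L]

theorem isSkewAdjoint_ad_of_lieInvariant {Φ : BilinForm R L} (hinv : Φ.lieInvariant L) (x : L) :
    Φ.IsSkewAdjoint (ad R L x) :=
  fun y z ↦ (hinv x y z).trans (map_neg (Φ y) ⁅x, z⁆).symm

theorem orthogonal_lie_top_top_eq_maxTrivSubmodule {M : Type*} [AddCommGroup M] [Module R M]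
    [LieRingModule L M] [LieModule R L M] {Φ : BilinForm R M} (hsep : Φ.SeparatingRight)
    (hinv : Φ.lieInvariant L) :
    LieAlgebra.InvariantForm.orthogonal Φ hinv ⁅(⊤ : LieIdeal R L), (⊤ : LieSubmodule R L M)⁆ =
      LieModule.maxTrivSubmodule R L M := by
  ext z
  rw [LieAlgebra.InvariantForm.mem_orthogonal, LieModule.mem_maxTrivSubmodule]
  constructor
  · intro hz x
    refine hsep ⁅x, z⁆ fun y ↦ neg_eq_zero.mp ?_
    rw [← hinv]
    exact hz ⁅x, y⁆ (LieSubmodule.lie_mem_lie (LieSubmodule.mem_top x) (LieSubmodule.mem_top y))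
  · intro hz d hd
    rw [← LieSubmodule.mem_toSubmodule, LieSubmodule.lieIdeal_oper_eq_linear_span'] at hd
    induction hd using Submodule.span_induction with
    | mem _ h =>
      obtain ⟨x, -, y, -, rfl⟩ := h
      rw [hinv, hz, map_zero, neg_zero]
    | zero => rw [map_zero, LinearMap.zero_apply]
    | add _ _ _ _ ha hb => rw [map_add, LinearMap.add_apply, ha, hb, add_zero]
    | smul c _ _ h => rw [map_smul, LinearMap.smul_apply, h, smul_zero]

theorem le_center_of_isLieAbelian_of_anisotropic {Φ : BilinForm R L}
    (hinv : Φ.lieInvariant L) (haniso : Φ.toQuadraticMap.Anisotropic) (I : LieIdeal R L)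
    [IsLieAbelian I] : I ≤ center R L := by
  intro x hx
  refine (LieModule.mem_maxTrivSubmodule R L L x).mpr fun y ↦ ?_
  have hxxy : ⁅x, ⁅x, y⁆⁆ = 0 :=
    congrArg Subtype.val (trivial_lie_zero I I ⟨x, hx⟩ ⟨⁅x, y⁆, lie_mem_left R L I x y hx⟩)
  rw [← lie_skew, lie_eq_zero_of_lie_lie_eq_zero_of_anisotropic hinv haniso hxxy, neg_zero]

theorem hasTrivialRadical_of_center_eq_bot_of_anisotropic {Φ : BilinForm R L}
    (hinv : Φ.lieInvariant L) (haniso : Φ.toQuadraticMap.Anisotropic)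
    (hcenter : center R L = ⊥) : LieAlgebra.HasTrivialRadical R L :=
  (LieAlgebra.hasTrivialRadical_iff_no_abelian_ideals R L).mpr fun I _ ↦
    eq_bot_iff.mpr (hcenter ▸ le_center_of_isLieAbelian_of_anisotropic hinv haniso I)

theorem center_eq_bot_of_isCompl_center {I : LieIdeal R L} (hI : IsCompl I (center R L)) :
    center R I = ⊥ := by
  refine eq_bot_iff.mpr fun x hx ↦ ?_
  have hx_center : (x : L) ∈ center R L := by
    refine (LieModule.mem_maxTrivSubmodule R L L x).mpr fun y ↦ ?_
    obtain ⟨a, ha, z, hz, rfl⟩ : ∃ a ∈ I, ∃ z ∈ center R L, a + z = y :=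
      (LieSubmodule.mem_sup _ _ _).mp (hI.sup_eq_top ▸ LieSubmodule.mem_top y)
    have hax : ⁅a, (x : L)⁆ = 0 :=
      congrArg Subtype.val ((LieModule.mem_maxTrivSubmodule R I I x).mp hx ⟨a, ha⟩)
    have hxz : ⁅(x : L), z⁆ = 0 := (LieModule.mem_maxTrivSubmodule R L L z).mp hz x
    rw [add_lie, hax, ← lie_skew, hxz, neg_zero, add_zero]
  have hx_bot : (x : L) ∈ (⊥ : LieIdeal R L) := hI.inf_eq_bot ▸ ⟨x.2, hx_center⟩
  exact Subtype.ext hx_bot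

end CommRing

section Field

variable {K L : Type*} [Field K] [LieRing L] [LieAlgebra K L]

theorem isCompl_lie_top_top_maxTrivSubmodule_of_anisotropic {M : Type*} [AddCommGroup M]
    [Module K M] [FiniteDimensional K M] [LieRingModule L M] [LieModule K L M]
    {Φ : BilinForm K M} (hinv : Φ.lieInvariant L) (haniso : Φ.toQuadraticMap.Anisotropic) :
    IsCompl ⁅(⊤ : LieIdeal K L), (⊤ : LieSubmodule K L M)⁆
      (LieModule.maxTrivSubmodule K L M) := by
  have hsep : Φ.SeparatingRight := fun y hy ↦ haniso y (hy y)
  rw [← orthogonal_lie_top_top_eq_maxTrivSubmodule hsep hinv, ← LieSubmodule.isCompl_toSubmodule]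
  exact isCompl_orthogonal_of_anisotropic haniso _

variable [FiniteDimensional K L] {Φ : BilinForm K L}

theorem hasTrivialRadical_lie_top_top_of_anisotropic (hinv : Φ.lieInvariant L)
    (haniso : Φ.toQuadraticMap.Anisotropic) :
    LieAlgebra.HasTrivialRadical K (⁅(⊤ : LieIdeal K L), (⊤ : LieIdeal K L)⁆ : LieIdeal K L) := by
  set D : LieIdeal K L := ⁅(⊤ : LieIdeal K L), (⊤ : LieIdeal K L)⁆
  have hinvD : (Φ.restrict D.toSubmodule).lieInvariant D := fun x y z ↦ hinv x y z
  have hanisoD := anisotropic_toQuadraticMap_restrict haniso D.toSubmodule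
  exact hasTrivialRadical_of_center_eq_bot_of_anisotropic hinvD hanisoD <|
    center_eq_bot_of_isCompl_center <|
      isCompl_lie_top_top_maxTrivSubmodule_of_anisotropic hinv haniso

theorem stmt1_general (hinv : Φ.lieInvariant L) (haniso : Φ.toQuadraticMap.Anisotropic)
    (u : LieSubalgebra K L) :
    IsCompl ⁅(⊤ : LieIdeal K u), (⊤ : LieIdeal K u)⁆ (center K u) ∧
      LieAlgebra.HasTrivialRadical K (⁅(⊤ : LieIdeal K u), (⊤ : LieIdeal K u)⁆ : LieIdeal K u) ∧
      ∀ x : u, (ad K L x).IsSemisimple := by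
  have hinvu : (Φ.restrict u.toSubmodule).lieInvariant u := fun x y z ↦ hinv x y z
  have hanisou := anisotropic_toQuadraticMap_restrict haniso u.toSubmodule
  exact ⟨isCompl_lie_top_top_maxTrivSubmodule_of_anisotropic hinvu hanisou,
    hasTrivialRadical_lie_top_top_of_anisotropic hinvu hanisou,
    fun x ↦ isSemisimple_of_isSkewAdjoint_of_anisotropic haniso
      (isSkewAdjoint_ad_of_lieInvariant hinv (x : L))⟩

end Field

/-- Every Lie subalgebra `u` of a finite-dimensional real semisimple Lie algebra `g` with
negative definite Killing form is reductive in `g`: `u` is the internal direct sum of its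
derived subalgebra `⁅u,u⁆` and its center `Z(u)`, the derived subalgebra is semisimple, and
`ad_g x` is a semisimple endomorphism of `g` for every `x ∈ Z(u)`. -/
theorem stmt1 (L : Type*) [LieRing L] [LieAlgebra ℝ L] [Module.Finite ℝ L]
    [LieAlgebra.HasTrivialRadical ℝ L]
    (hkill : ∀ x : L, x ≠ 0 → killingForm ℝ L x x < 0)
    (u : LieSubalgebra ℝ L) :
    (⁅(⊤ : LieIdeal ℝ u), (⊤ : LieIdeal ℝ u)⁆ ⊔ LieAlgebra.center ℝ u = ⊤) ∧
    (⁅(⊤ : LieIdeal ℝ u), (⊤ : LieIdeal ℝ u)⁆ ⊓ LieAlgebra.center ℝ u = ⊥) ∧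
    LieAlgebra.HasTrivialRadical ℝ
      ↥(⁅(⊤ : LieIdeal ℝ u), (⊤ : LieIdeal ℝ u)⁆ : LieIdeal ℝ ↥u) ∧
    (∀ x : u, x ∈ LieAlgebra.center ℝ u → ((LieAlgebra.ad ℝ L) (x : L)).IsSemisimple) := by
  have haniso : (killingForm ℝ L).toQuadraticMap.Anisotropic :=
    fun x hx ↦ by_contra fun hne ↦ (hkill x hne).ne hx
  obtain ⟨hcompl, hradical, had⟩ :=
    stmt1_general (LieModule.traceForm_lieInvariant ℝ L L) haniso u
  exact ⟨hcompl.sup_eq_top, hcompl.inf_eq_bot, hradical, fun x _ ↦ had x⟩
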